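/- For all n ≥ 0 and 0 ≤ ℓ ≤ n, totalB(n,ℓ) = (n(2ℓ+1)/(n+ℓ+1)) * C(2n, n-ℓ) − C(2n, n-2ℓ-1) − 2 * ∑_{j=ℓ+1}^{2ℓ} C(2n, n-j), where totalB(n,ℓ) is the sum over all ordered trees T with n edges and all nodes v at level ℓ of the number of nodes visited before v in breadth-first search. -/

import Mathlib

open scoped Classical

/-- Height (number of up-steps minus number of down-steps) after the first `k` steps
of the word `w`, where `true` encodes an up-step and `false` a down-step. -/
def heightAt (n : ℕ) (w : Fin n → Bool) (k : ℕ) : ℤ :=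
  ((Finset.univ.filter (fun i : Fin n => (i : ℕ) < k ∧ w i = true)).card : ℤ) -
  ((Finset.univ.filter (fun i : Fin n => (i : ℕ) < k ∧ w i = false)).card : ℤ)

/-- `w` is a Dyck word of semilength `n` (the standard encoding of an ordered tree
with `n` edges via its pre-order traversal: `true` = step away from the root). -/
def IsDyck (n : ℕ) (w : Fin (2 * n) → Bool) : Prop :=
  (Finset.univ.filter (fun i : Fin (2 * n) => w i = true)).card = n ∧
  ∀ k : ℕ, k ≤ 2 * n → 0 ≤ heightAt (2 * n) w k

/-- The ordered trees with `n` edges, encoded as Dyck words. -/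
noncomputable def dyckWords (n : ℕ) : Finset (Fin (2 * n) → Bool) :=
  Finset.univ.filter (fun w => IsDyck n w)

/-- The nodes of the tree encoded by `w` : `none` is the root and `some i` for an
up-step `i` (`w i = true`) is the node this step leads to. -/
def isNode (n : ℕ) (w : Fin (2 * n) → Bool) : Option (Fin (2 * n)) → Prop
  | none => True
  | some i => w i = true

/-- The level (distance to the root) of a node. -/
def nodeLevel (n : ℕ) (w : Fin (2 * n) → Bool) : Option (Fin (2 * n)) → ℤ
  | none => 0
  | some i => heightAt (2 * n) w ((i : ℕ) + 1)

/-- The set of nodes at level `ℓ` of the tree encoded by `w`. -/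
noncomputable def nodesAtLevel (n : ℕ) (w : Fin (2 * n) → Bool) (ℓ : ℕ) :
    Finset (Option (Fin (2 * n))) :=
  Finset.univ.filter (fun v => isNode n w v ∧ nodeLevel n w v = (ℓ : ℤ))

/-- The number of nodes visited before the given node in the depth-first (pre-order)
traversal: the root comes first, and the non-root nodes appear in the order of their
up-steps in the Dyck word. -/
noncomputable def dfsScore (n : ℕ) (w : Fin (2 * n) → Bool) : Option (Fin (2 * n)) → ℕ
  | none => 0
  | some i => 1 +
      (Finset.univ.filter (fun j : Fin (2 * n) => (j : ℕ) < (i : ℕ) ∧ w j = true)).card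

/-- The number of nodes visited before the given node in breadth-first search:
nodes are visited level by level, and from left to right within a level. -/
noncomputable def bfsScore (n : ℕ) (w : Fin (2 * n) → Bool) : Option (Fin (2 * n)) → ℕ
  | none => 0
  | some i => 1 +
      (Finset.univ.filter (fun j : Fin (2 * n) =>
        w j = true ∧ (nodeLevel n w (some j) < nodeLevel n w (some i) ∨
          (nodeLevel n w (some j) = nodeLevel n w (some i) ∧ (j : ℕ) < (i : ℕ))))).card

/-- Sum of the dfs scores of all nodes at level `ℓ` over all ordered trees with `n` edges. -/
noncomputable def totalD (n ℓ : ℕ) : ℕ :=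
  ∑ w ∈ dyckWords n, ∑ v ∈ nodesAtLevel n w ℓ, dfsScore n w v

/-- Sum of the bfs scores of all nodes at level `ℓ` over all ordered trees with `n` edges. -/
noncomputable def totalB (n ℓ : ℕ) : ℕ :=
  ∑ w ∈ dyckWords n, ∑ v ∈ nodesAtLevel n w ℓ, bfsScore n w v

/-- Total number of nodes at level `ℓ` among all ordered trees with `n` edges. -/
noncomputable def levelCount (n ℓ : ℕ) : ℕ :=
  ∑ w ∈ dyckWords n, (nodesAtLevel n w ℓ).card

/-- Binomial coefficient with an integer lower index: zero when the lower index is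
negative. -/
def ch (N : ℕ) (k : ℤ) : ℚ := if 0 ≤ k then (N.choose k.toNat : ℚ) else 0

/-! ### Lattice path numbers -/

/-- Unrestricted paths of length `m` from height `h` to height `0`. -/
def bb : ℕ → ℤ → ℚ
  | 0, h => if h = 0 then 1 else 0
  | m + 1, h => bb m (h + 1) + bb m (h - 1)

/-- Tail sums of `bb`. -/
def TT : ℕ → ℤ → ℚ
  | 0, d => if d < 0 ∧ d % 2 = 1 then 1 else 0
  | m + 1, d => TT m (d + 1) + TT m (d - 1)

theorem TT_diff (m : ℕ) : ∀ d : ℤ, TT m (d - 1) - TT m (d + 1) = bb m d := by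
  induction m with
  | zero =>
    intro d
    simp only [TT, bb]
    split_ifs <;> first | omega | norm_num
  | succ m ih =>
    intro d
    simp only [TT, bb]
    rw [← ih (d + 1), ← ih (d - 1)]
    ring_nf

theorem bb_gt (m : ℕ) : ∀ h : ℤ, (m : ℤ) < h → bb m h = 0 := by
  induction m with
  | zero =>
    intro h hh
    simp only [bb]
    rw [if_neg]
    push_cast at hh
    omega
  | succ m ih =>
    intro h hh
    push_cast at hh
    simp only [bb]
    rw [ih _ (by omega), ih _ (by omega), add_zero]

theorem bb_choose (m : ℕ) : ∀ r : ℕ, bb m ((m : ℤ) - 2 * r) = (m.choose r : ℚ) := by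
  induction m with
  | zero =>
    intro r
    simp only [bb]
    cases r with
    | zero => simp
    | succ r => 
      rw [if_neg (by push_cast; omega)]
      simp
  | succ m ih =>
    intro r
    simp only [bb]
    cases r with
    | zero =>
      rw [bb_gt m _ (by push_cast; omega)]
      have := ih 0
      simp at this ⊢
      exact this
    | succ r =>
      rw [Nat.choose_succ_succ]
      push_cast
      rw [← ih r, ← ih (r + 1)]
      push_cast
      congr 2 <;> ring

theorem bb_ch (n : ℕ) (j : ℤ) : bb (2 * n) (2 * j) = ch (2 * n) ((n : ℤ) - j) := by
  unfold ch
  split_ifs with hj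
  · rw [← bb_choose]
    congr 1
    push_cast
    omega
  · apply bb_gt
    push_cast
    omega

/-- Half-line solution with source `bb m c` at height `k - 1`. -/
def VV (k c : ℤ) (m : ℕ) (h : ℤ) : ℚ := TT m (c + |h - k + 1|) - TT m (c + h + k + 1)

theorem VV_zero (k c h : ℤ) (hk : 0 ≤ k) (hc : 0 ≤ c) (hh : -1 ≤ h) : VV k c 0 h = 0 := by
  have := abs_nonneg (h - k + 1)
  simp only [VV, TT]
  rw [if_neg (by omega), if_neg (by omega), sub_zero]

theorem VV_neg (k c : ℤ) (m : ℕ) (hk : 0 ≤ k) : VV k c m (-1) = 0 := by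
  simp only [VV]
  rw [show (-1 - k + 1 : ℤ) = -k by ring, abs_neg, abs_of_nonneg hk]
  ring_nf

theorem VV_succ (k c : ℤ) (m : ℕ) (h : ℤ) :
    VV k c (m + 1) h = VV k c m (h + 1) + VV k c m (h - 1)
      + if h + 1 = k then bb m c else 0 := by
  simp only [VV, TT]
  rw [← TT_diff]
  rcases lt_trichotomy (h + 1) k with hlt | heq | hgt
  · rw [if_neg (by omega), abs_of_nonpos (by omega : h - k + 1 ≤ 0),
      abs_of_nonpos (by omega : h + 1 - k + 1 ≤ 0), abs_of_nonpos (by omega : h - 1 - k + 1 ≤ 0)]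
    ring_nf
  · subst heq
    rw [if_pos rfl]
    rw [show h - (h + 1) + 1 = 0 by ring, show h + 1 - (h + 1) + 1 = 1 by ring,
      show h - 1 - (h + 1) + 1 = -1 by ring]
    simp only [abs_zero, abs_one, abs_neg]
    ring_nf
  · rw [if_neg (by omega), abs_of_nonneg (by omega : 0 ≤ h - k + 1),
      abs_of_nonneg (by omega : 0 ≤ h + 1 - k + 1), abs_of_nonneg (by omega : 0 ≤ h - 1 - k + 1)]
    ring_nf

theorem VV_sol (u : ℕ → ℤ → ℚ) (k c d : ℤ) (hk : 0 ≤ k) (hc : 0 ≤ c) (hd : 0 ≤ d)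
    (h0 : ∀ h, u 0 h = 0) (hneg : ∀ m, u m (-1) = 0)
    (hs : ∀ m h, 0 ≤ h → u (m + 1) h = u m (h + 1) + u m (h - 1)
      + if h + 1 = k then bb m c - bb m d else 0) :
    ∀ m h, -1 ≤ h → u m h = VV k c m h - VV k d m h := by
  intro m
  induction m with
  | zero =>
    intro h hh
    rw [h0, VV_zero k c h hk hc hh, VV_zero k d h hk hd hh, sub_zero]
  | succ m ih =>
    intro h hh
    rcases eq_or_lt_of_le hh with rfl | hlt
    · rw [hneg, VV_neg k c _ hk, VV_neg k d _ hk, sub_zero]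
    · rw [hs m h (by omega), ih _ (by omega), ih _ (by omega), VV_succ, VV_succ]
      split_ifs <;> ring

/-! ### Heights of words -/

theorem heightAt_sum (m : ℕ) (w : Fin m → Bool) (k : ℕ) :
    heightAt m w k = ∑ i : Fin m, if (i : ℕ) < k then (if w i = true then (1 : ℤ) else -1) else 0 := by
  unfold heightAt
  rw [Finset.card_filter, Finset.card_filter]
  push_cast
  rw [← Finset.sum_sub_distrib]
  apply Finset.sum_congr rfl
  intro i _
  cases w i <;> by_cases h : (i : ℕ) < k <;> simp [h]

theorem heightAt_zero (m : ℕ) (w : Fin m → Bool) : heightAt m w 0 = 0 := by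
  rw [heightAt_sum]; simp

theorem heightAt_cons (m : ℕ) (a : Bool) (w : Fin m → Bool) (k : ℕ) :
    heightAt (m + 1) (Fin.cons a w) (k + 1) = (if a = true then 1 else -1) + heightAt m w k := by
  rw [heightAt_sum, heightAt_sum, Fin.sum_univ_succ]
  simp

theorem heightAt_step (m : ℕ) (w : Fin m → Bool) (i : Fin m) (hi : w i = true) :
    heightAt m w ((i : ℕ) + 1) = heightAt m w i + 1 := by
  rw [heightAt_sum, heightAt_sum]
  have : (1 : ℤ) = ∑ j : Fin m, if j = i then 1 else 0 := by simp
  rw [this, ← Finset.sum_add_distrib, ← this]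
  apply Finset.sum_congr rfl
  intro j _
  by_cases hj : j = i
  · subst hj; simp [hi]
  · have h1 : (j : ℕ) ≠ i := fun h => hj (Fin.ext h)
    have h2 : ((j : ℕ) < (i : ℕ) + 1) ↔ ((j : ℕ) < (i : ℕ)) := by omega
    simp [hj, h2]

/-- Nonnegative path from `h` to `0`. -/
def GoodW (m : ℕ) (h : ℤ) (w : Fin m → Bool) : Prop :=
  (∀ k : ℕ, k ≤ m → 0 ≤ h + heightAt m w k) ∧ h + heightAt m w m = 0

theorem goodW_cons (m : ℕ) (h : ℤ) (a : Bool) (w : Fin m → Bool) :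
    GoodW (m + 1) h (Fin.cons a w) ↔ 0 ≤ h ∧ GoodW m (h + if a = true then 1 else -1) w := by
  unfold GoodW
  rw [heightAt_cons, ← add_assoc, ← and_assoc]
  apply and_congr_left'
  constructor
  · intro H
    refine ⟨by simpa [heightAt_zero] using H 0 (by omega), fun k hk => ?_⟩
    have := H (k + 1) (by omega)
    rwa [heightAt_cons, ← add_assoc] at this
  · rintro ⟨H0, H⟩ k hk
    cases k with
    | zero => simpa [heightAt_zero] using H0
    | succ k =>
      rw [heightAt_cons, ← add_assoc]
      exact H k (by omega)

theorem isDyck_iff (n : ℕ) (w : Fin (2 * n) → Bool) : IsDyck n w ↔ GoodW (2 * n) 0 w := by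
  unfold IsDyck GoodW
  simp only [zero_add]
  rw [and_comm]
  apply and_congr_right'
  have h1 : heightAt (2 * n) w (2 * n) =
      ((Finset.univ.filter (fun i : Fin (2 * n) => w i = true)).card : ℤ) -
      ((Finset.univ.filter (fun i : Fin (2 * n) => ¬ (w i = true))).card : ℤ) := by
    unfold heightAt
    simp
  have h2 := Finset.card_filter_add_card_filter_not (s := (Finset.univ : Finset (Fin (2 * n))))
    (fun i => w i = true)
  rw [Finset.card_univ, Fintype.card_fin] at h2
  rw [h1]
  omega

/-! ### Statistics -/

/-- Indicator of good words. -/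
noncomputable def chi (m : ℕ) (h : ℤ) (w : Fin m → Bool) : ℚ := if GoodW m h w then 1 else 0

/-- Indicator that step `i` is an up-step into level `l`. -/
noncomputable def mk (m : ℕ) (h : ℤ) (w : Fin m → Bool) (l : ℤ) (i : Fin m) : ℚ :=
  if w i = true ∧ h + heightAt m w ((i : ℕ) + 1) = l then 1 else 0

/-- Number of up-steps into level `l`. -/
noncomputable def cnt (m : ℕ) (h : ℤ) (w : Fin m → Bool) (l : ℤ) : ℚ := ∑ i, mk m h w l i

/-- Number of pairs of up-steps, the first into level `p`, a later one into level `q`. -/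
noncomputable def pr (m : ℕ) (h : ℤ) (w : Fin m → Bool) (p q : ℤ) : ℚ :=
  ∑ i, ∑ j, if i < j then mk m h w p i * mk m h w q j else 0

theorem chi_cons (m : ℕ) (h : ℤ) (a : Bool) (w : Fin m → Bool) :
    chi (m + 1) h (Fin.cons a w) =
      if 0 ≤ h then chi m (h + if a = true then 1 else -1) w else 0 := by
  unfold chi
  simp only [goodW_cons]
  by_cases h0 : 0 ≤ h <;> simp [h0]

theorem mk_cons_zero (m : ℕ) (h : ℤ) (a : Bool) (w : Fin m → Bool) (l : ℤ) :
    mk (m + 1) h (Fin.cons a w) l 0 = if a = true ∧ h + 1 = l then 1 else 0 := by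
  unfold mk
  rw [Fin.val_zero, heightAt_cons, heightAt_zero]
  cases a <;> simp

theorem mk_cons_succ (m : ℕ) (h : ℤ) (a : Bool) (w : Fin m → Bool) (l : ℤ) (i : Fin m) :
    mk (m + 1) h (Fin.cons a w) l i.succ = mk m (h + if a = true then 1 else -1) w l i := by
  unfold mk
  rw [Fin.val_succ, heightAt_cons, Fin.cons_succ, ← add_assoc]

theorem cnt_cons (m : ℕ) (h : ℤ) (a : Bool) (w : Fin m → Bool) (l : ℤ) :
    cnt (m + 1) h (Fin.cons a w) l = (if a = true ∧ h + 1 = l then 1 else 0)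
      + cnt m (h + if a = true then 1 else -1) w l := by
  unfold cnt
  rw [Fin.sum_univ_succ, mk_cons_zero]
  simp only [mk_cons_succ]

theorem pr_cons (m : ℕ) (h : ℤ) (a : Bool) (w : Fin m → Bool) (p q : ℤ) :
    pr (m + 1) h (Fin.cons a w) p q =
      (if a = true ∧ h + 1 = p then 1 else 0) * cnt m (h + if a = true then 1 else -1) w q
      + pr m (h + if a = true then 1 else -1) w p q := by
  unfold pr cnt
  rw [Fin.sum_univ_succ, Fin.sum_univ_succ, Finset.mul_sum]
  simp only [Fin.sum_univ_succ, mk_cons_zero, mk_cons_succ, Fin.succ_lt_succ_iff, Fin.succ_pos,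
    if_true, Fin.not_lt_zero, if_false, zero_add, lt_irrefl]

theorem sum_words (m : ℕ) (f : (Fin (m + 1) → Bool) → ℚ) :
    ∑ w, f w = ∑ w : Fin m → Bool, f (Fin.cons true w) + ∑ w : Fin m → Bool, f (Fin.cons false w) := by
  rw [← (Fin.consEquiv (fun _ : Fin (m + 1) => Bool)).sum_comp, Fintype.sum_prod_type,
    Fintype.sum_bool]
  rfl

/-- Number of good words. -/
noncomputable def NN (m : ℕ) (h : ℤ) : ℚ := ∑ w, chi m h w
/-- Total number of marked up-steps. -/
noncomputable def AA (l : ℤ) (m : ℕ) (h : ℤ) : ℚ := ∑ w, chi m h w * cnt m h w l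
/-- Total number of marked pairs. -/
noncomputable def MM (p q : ℤ) (m : ℕ) (h : ℤ) : ℚ := ∑ w, chi m h w * pr m h w p q

theorem chi_neg (m : ℕ) (w : Fin m → Bool) : chi m (-1) w = 0 := by
  unfold chi
  rw [if_neg]
  rintro ⟨H, -⟩
  have := H 0 (by omega)
  rw [heightAt_zero] at this
  omega

theorem NN_eq (m : ℕ) : ∀ h : ℤ, -1 ≤ h → NN m h = bb m h - bb m (h + 2) := by
  induction m with
  | zero =>
    intro h hh
    simp only [NN, bb, chi, GoodW, heightAt_zero]
    simp
    by_cases h0 : h = 0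
    · subst h0; simp [heightAt_zero]
    · simp [h0]
      omega
  | succ m ih =>
    intro h hh
    rcases eq_or_lt_of_le hh with rfl | hlt
    · have : ∀ m : ℕ, ∀ x : ℤ, bb m (-x) = bb m x := by
        intro m
        induction m with
        | zero => intro x; simp [bb]
        | succ m ih2 =>
          intro x
          simp only [bb]
          rw [← ih2 (x + 1), ← ih2 (x - 1)]
          ring_nf
      rw [this]
      simp [NN, chi_neg]
    · have : NN (m + 1) h = NN m (h + 1) + NN m (h - 1) := by
        unfold NN
        rw [sum_words]
        simp [chi_cons, (by omega : 0 ≤ h), sub_eq_add_neg]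
      rw [this, ih _ (by omega), ih _ (by omega)]
      simp only [bb]
      ring_nf

theorem AA_eq (l : ℤ) (hl : 0 ≤ l) : ∀ m h, -1 ≤ h →
    AA l m h = VV l l m h - VV l (l + 2) m h := by
  apply VV_sol (AA l) l l (l + 2) hl hl (by omega)
  · intro h; simp [AA, cnt]
  · intro m; simp [AA, chi_neg]
  · intro m h hh
    rw [← NN_eq m l (by omega)]
    unfold AA
    rw [sum_words]
    simp only [chi_cons, cnt_cons, hh, if_true, mul_add, Finset.sum_add_distrib, NN]
    by_cases hl : h + 1 = l
    · simp [hl, sub_eq_add_neg]; ring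
    · simp [hl, sub_eq_add_neg]

theorem AA_val (p q : ℤ) (m : ℕ) (hq : 0 ≤ q) (hp : 0 ≤ p) :
    AA q m p = bb m (q + 1 + |p - q + 1|) - bb m (p + 2 * q + 2) := by
  rw [AA_eq q hq m p (by omega), ← TT_diff, ← TT_diff]
  simp only [VV]
  ring_nf

theorem MM_eq (p q : ℤ) (hp : 0 ≤ p) (hq : 0 ≤ q) : ∀ m h, -1 ≤ h →
    MM p q m h = VV p (q + 1 + |p - q + 1|) m h - VV p (p + 2 * q + 2) m h := by
  have := abs_nonneg (p - q + 1)
  apply VV_sol (MM p q) p _ _ hp (by omega) (by omega)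
  · intro h; simp [MM, pr]
  · intro m; simp [MM, chi_neg]
  · intro m h hh
    rw [← AA_val p q m hq hp]
    unfold MM
    rw [sum_words]
    simp only [chi_cons, pr_cons, hh, if_true, mul_add, Finset.sum_add_distrib, AA]
    by_cases hl : h + 1 = p
    · simp [hl, sub_eq_add_neg]; ring
    · simp [hl, sub_eq_add_neg]

theorem VV_at_zero (k c : ℤ) (m : ℕ) (hk : 1 ≤ k) : VV k c m 0 = bb m (c + k) := by
  rw [← TT_diff]
  simp only [VV]
  rw [abs_of_nonpos (by omega)]
  ring_nf

theorem MM_val (p q : ℤ) (m : ℕ) (hp : 1 ≤ p) (hq : 0 ≤ q) :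
    MM p q m 0 = bb m (q + 1 + |p - q + 1| + p) - bb m (2 * (p + q + 1)) := by
  rw [MM_eq p q (by omega) hq m 0 (by omega), VV_at_zero _ _ _ hp, VV_at_zero _ _ _ hp]
  ring_nf

theorem AA_zero (l : ℤ) (m : ℕ) (hl : 1 ≤ l) :
    AA l m 0 = bb m (2 * l) - bb m (2 * (l + 1)) := by
  rw [AA_eq l (by omega) m 0 (by omega), VV_at_zero _ _ _ hl, VV_at_zero _ _ _ hl]
  ring_nf

/-! ### Expressing `totalB` -/

theorem word_sum (n : ℕ) (w : Fin (2 * n) → Bool) (l : ℕ) (hl : 1 ≤ l) (hw : IsDyck n w) :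
    ((∑ v ∈ nodesAtLevel n w l, bfsScore n w v : ℕ) : ℚ) =
      cnt (2 * n) 0 w l + ∑ k ∈ Finset.Ico 1 l, (pr (2 * n) 0 w k l + pr (2 * n) 0 w l k)
        + pr (2 * n) 0 w l l := by
  have key : ∀ i j : Fin (2 * n),
      (if w i = true ∧ heightAt (2 * n) w ((i : ℕ) + 1) = l then
        (if w j = true ∧ (heightAt (2 * n) w ((j : ℕ) + 1) < heightAt (2 * n) w ((i : ℕ) + 1) ∨
          (heightAt (2 * n) w ((j : ℕ) + 1) = heightAt (2 * n) w ((i : ℕ) + 1) ∧ (j : ℕ) < (i : ℕ)))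
          then (1 : ℚ) else 0) else 0) =
      ∑ k ∈ Finset.Ico 1 l, ((if j < i then mk (2 * n) 0 w k j * mk (2 * n) 0 w l i else 0)
        + (if i < j then mk (2 * n) 0 w l i * mk (2 * n) 0 w k j else 0))
      + (if j < i then mk (2 * n) 0 w l j * mk (2 * n) 0 w l i else 0) := by
    intro i j
    by_cases hi : w i = true ∧ heightAt (2 * n) w ((i : ℕ) + 1) = l
    swap
    · have : mk (2 * n) 0 w l i = 0 := by unfold mk; rw [zero_add, if_neg hi]
      simp [hi, this]
    have hmi : mk (2 * n) 0 w l i = 1 := by unfold mk; rw [zero_add, if_pos hi]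
    rw [if_pos hi, hi.2, hmi]
    by_cases hj : w j = true
    swap
    · have : ∀ k, mk (2 * n) 0 w k j = 0 := by intro k; unfold mk; rw [if_neg (by tauto)]
      simp [hj, this]
    have hpos : 1 ≤ heightAt (2 * n) w ((j : ℕ) + 1) := by
      rw [heightAt_step _ _ _ hj]
      have := hw.2 j (by omega)
      omega
    obtain ⟨c, hc⟩ := Int.eq_ofNat_of_zero_le (by omega : 0 ≤ heightAt (2 * n) w ((j : ℕ) + 1))
    have hmj : ∀ k : ℕ, mk (2 * n) 0 w k j = if c = k then 1 else 0 := by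
      intro k; unfold mk; rw [zero_add, hc]; simp [hj]
    rw [hc] at hpos ⊢
    simp only [hmj, mul_one, one_mul, hj, true_and]
    have hs : ∀ k : ℕ, ((if j < i then (if c = k then (1 : ℚ) else 0) else 0)
        + (if i < j then (if c = k then 1 else 0) else 0)) =
        if c = k then (if j = i then 0 else 1) else 0 := by
      intro k
      rcases lt_trichotomy i j with h | h | h
      · simp [h, h.ne', not_lt_of_gt h]
      · simp [h]
      · simp [h, h.ne, not_lt_of_gt h]
    simp only [hs, Finset.sum_ite_eq, Finset.mem_Ico]
    have hne : j = i → c = l := by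
      rintro rfl
      have := hi.2
      omega
    have hlt : (j : ℕ) < i ↔ j < i := Iff.rfl
    simp only [hlt]
    by_cases h1 : c < l
    · have h2 : j ≠ i := fun h => by have := hne h; omega
      have h3 : c ≠ l := by omega
      have h4 : 1 ≤ c := by omega
      simp [h1, h2, h3, h4]
    · by_cases h3 : c = l
      · simp [h3]
      · simp [h1, h3]
  unfold nodesAtLevel
  rw [Finset.sum_filter, Fintype.sum_option]
  have e1 : ∀ p q : ℤ, pr (2 * n) 0 w p q =
      ∑ i, ∑ j, if j < i then mk (2 * n) 0 w p j * mk (2 * n) 0 w q i else 0 := by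
    intro p q
    unfold pr
    rw [Finset.sum_comm]
  have e2 : ∑ k ∈ Finset.Ico 1 l, (pr (2 * n) 0 w k l + pr (2 * n) 0 w l k)
        + pr (2 * n) 0 w l l = ∑ i, ∑ j, (∑ k ∈ Finset.Ico 1 l,
        ((if j < i then mk (2 * n) 0 w k j * mk (2 * n) 0 w l i else 0)
        + (if i < j then mk (2 * n) 0 w l i * mk (2 * n) 0 w k j else 0))
      + (if j < i then mk (2 * n) 0 w l j * mk (2 * n) 0 w l i else 0)) := by
    simp only [Finset.sum_add_distrib]
    rw [← e1 l l]
    congr 2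
    · rw [Finset.sum_congr rfl (fun (k : ℕ) _ => e1 k l), Finset.sum_comm]
      apply Finset.sum_congr rfl
      intro i _
      rw [Finset.sum_comm]
    · unfold pr
      rw [Finset.sum_comm]
      apply Finset.sum_congr rfl
      intro i _
      rw [Finset.sum_comm]
  rw [add_assoc, e2]
  simp only [← key]
  unfold cnt mk
  rw [← Finset.sum_add_distrib]
  have hz : ¬ (isNode n w none ∧ nodeLevel n w none = (l : ℤ)) := by
    simp only [isNode, nodeLevel]
    omega
  rw [if_neg hz, zero_add, Nat.cast_sum]
  apply Finset.sum_congr rfl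
  intro i _
  simp only [zero_add]
  by_cases hi : w i = true ∧ heightAt (2 * n) w ((i : ℕ) + 1) = l
  · have hi' : isNode n w (some i) ∧ nodeLevel n w (some i) = (l : ℤ) := hi
    rw [if_pos hi']
    simp only [if_pos hi]
    rw [bfsScore, Finset.card_filter]
    push_cast
    congr!
  · have hi' : ¬ (isNode n w (some i) ∧ nodeLevel n w (some i) = (l : ℤ)) := hi
    rw [if_neg hi']
    simp only [if_neg hi]
    simp

theorem totalB_MM (n l : ℕ) (hl : 1 ≤ l) :
    (totalB n l : ℚ) = AA l (2 * n) 0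
      + ∑ k ∈ Finset.Ico 1 l, (MM k l (2 * n) 0 + MM l k (2 * n) 0) + MM l l (2 * n) 0 := by
  unfold totalB dyckWords
  rw [Nat.cast_sum, Finset.sum_filter]
  have : ∀ w : Fin (2 * n) → Bool, (if IsDyck n w then
      ((∑ v ∈ nodesAtLevel n w l, bfsScore n w v : ℕ) : ℚ) else 0) =
      chi (2 * n) 0 w * (cnt (2 * n) 0 w l
        + ∑ k ∈ Finset.Ico 1 l, (pr (2 * n) 0 w k l + pr (2 * n) 0 w l k)
        + pr (2 * n) 0 w l l) := by
    intro w
    unfold chi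
    rw [← isDyck_iff]
    split_ifs with hw
    · rw [word_sum n w l hl hw, one_mul]
    · rw [zero_mul]
  rw [Finset.sum_congr rfl (fun w _ => this w)]
  simp only [mul_add, Finset.sum_add_distrib, Finset.mul_sum, AA, MM]
  congr 3
  · rw [Finset.sum_comm]
  · rw [Finset.sum_comm]

theorem totalB_zero (n : ℕ) : totalB n 0 = 0 := by
  unfold totalB
  apply Finset.sum_eq_zero
  intro w hw
  apply Finset.sum_eq_zero
  intro v hv
  have hw' : IsDyck n w := by simpa [dyckWords] using hw
  cases v with
  | none => rfl
  | some i =>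
    exfalso
    rw [nodesAtLevel, Finset.mem_filter] at hv
    simp only [isNode, nodeLevel] at hv
    have h1 := heightAt_step _ w i hv.2.1
    have h2 := hw'.2 i (by omega)
    have h3 := hv.2.2
    push_cast at h3
    omega

theorem choose_rel (n l : ℕ) (h : l ≤ n) :
    ch (2 * n) ((n : ℤ) - (l + 1)) * (n + l + 1) = (Nat.choose (2 * n) (n - l) : ℚ) * (n - l) := by
  unfold ch
  split_ifs with h1
  · obtain ⟨d, rfl⟩ : ∃ d, n = l + 1 + d := ⟨n - l - 1, by omega⟩
    have e : (((l + 1 + d : ℕ) : ℤ) - (l + 1)).toNat = d := by push_cast; omega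
    rw [e, show l + 1 + d - l = d + 1 by omega]
    have := Nat.choose_succ_right_eq (2 * (l + 1 + d)) d
    rw [show 2 * (l + 1 + d) - d = 2 * l + 2 + d by omega] at this
    have h2 : (((2 * (l + 1 + d)).choose (d + 1) : ℕ) : ℚ) * (d + 1) =
      ((2 * (l + 1 + d)).choose d : ℕ) * (2 * l + 2 + d) := by exact_mod_cast this
    push_cast
    linear_combination -h2
  · have : n = l := by omega
    subst this
    simp

/-- totalB(n,ℓ) = (n(2ℓ+1)/(n+ℓ+1))·C(2n, n-ℓ) − C(2n, n-2ℓ-1) − 2·∑_{j=ℓ+1}^{2ℓ} C(2n, n-j),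
with the convention that binomials with negative lower index vanish. -/
theorem totalB_eq (n ℓ : ℕ) (h : ℓ ≤ n) :
    (totalB n ℓ : ℚ) =
      ((n : ℚ) * (2 * ℓ + 1) / (n + ℓ + 1)) * Nat.choose (2 * n) (n - ℓ)
        - ch (2 * n) ((n : ℤ) - 2 * ℓ - 1)
        - 2 * ∑ j ∈ Finset.Icc (ℓ + 1) (2 * ℓ), ch (2 * n) ((n : ℤ) - j) := by
  have hnl : (n : ℚ) + ℓ + 1 ≠ 0 := by positivity
  have hr := choose_rel n ℓ h
  have hb : (Nat.choose (2 * n) (n - ℓ) : ℚ) = ch (2 * n) ((n : ℤ) - ℓ) := by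
    unfold ch
    rw [if_pos (by omega)]
    congr 2
    omega
  have hmain : ((n : ℚ) * (2 * ℓ + 1) / (n + ℓ + 1)) * Nat.choose (2 * n) (n - ℓ) =
      ℓ * ch (2 * n) ((n : ℤ) - ℓ) + (ℓ + 1) * ch (2 * n) ((n : ℤ) - (ℓ + 1)) := by
    rw [← hb]
    field_simp
    linear_combination (-(ℓ : ℚ) - 1) * hr
  rw [hmain]
  rcases Nat.eq_zero_or_pos ℓ with rfl | hl
  · rw [totalB_zero]
    simp
  · rw [totalB_MM n ℓ hl, AA_zero _ _ (by omega), MM_val _ _ _ (by omega) (by omega)]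
    have hk : ∀ k ∈ Finset.Ico 1 ℓ, MM k ℓ (2 * n) 0 + MM ℓ k (2 * n) 0 =
        (ch (2 * n) ((n : ℤ) - ℓ) + ch (2 * n) ((n : ℤ) - (ℓ + 1)))
          - 2 * ch (2 * n) ((n : ℤ) - ((ℓ + 1 + k : ℕ) : ℤ)) := by
      intro k hk
      rw [Finset.mem_Ico] at hk
      rw [MM_val _ _ _ (by omega) (by omega), MM_val _ _ _ (by omega) (by omega),
        abs_of_nonpos (by omega), abs_of_nonneg (by omega), ← bb_ch, ← bb_ch, ← bb_ch]
      push_cast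
      ring_nf
    rw [Finset.sum_congr rfl hk, Finset.sum_sub_distrib, Finset.sum_const, Nat.card_Ico,
      ← Finset.mul_sum]
    have hI : ∑ j ∈ Finset.Icc (ℓ + 1) (2 * ℓ), ch (2 * n) ((n : ℤ) - j) =
        ch (2 * n) ((n : ℤ) - (ℓ + 1)) +
          ∑ k ∈ Finset.Ico 1 ℓ, ch (2 * n) ((n : ℤ) - ((ℓ + 1 + k : ℕ) : ℤ)) := by
      have : Finset.Icc (ℓ + 1) (2 * ℓ) = Finset.Ico (0 + (ℓ + 1)) (ℓ + (ℓ + 1)) := by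
        ext x; simp only [Finset.mem_Icc, Finset.mem_Ico]; omega
      rw [this, ← Finset.sum_Ico_add (fun j : ℕ => ch (2 * n) ((n : ℤ) - j)) 0 ℓ (ℓ + 1),
        Finset.sum_eq_sum_Ico_succ_bot hl]
      push_cast
      simp
    rw [hI, bb_ch, bb_ch, bb_ch,
      show (ℓ : ℤ) + 1 + |(ℓ : ℤ) - ℓ + 1| + ℓ = 2 * (ℓ + 1) by simp; ring, bb_ch]
    rw [nsmul_eq_mul, Nat.cast_sub hl,
      show (n : ℤ) - (ℓ + ℓ + 1) = n - 2 * ℓ - 1 by ring]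
    push_cast
    ring
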